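/- arXiv:1809.09842 — 7 statements merged into one kernel-verified Lean document; each statement's English description precedes it below -/
import Mathlib

section
/- Let V be an m × n real matrix, μ ∈ ℝ^m, and let v ∈ ℝ^n with v_k ≥ 0 for all k and V v = μ, and c ∈ ℝ^n with V c = 0. (i) If c has a strictly positive entry, set α_1 = min{ v_k / c_k : c_k > 0 }; then V (v − α_1 c) = μ, every entry of v − α_1 c is nonnegative, and (v − α_1 c)_{k_1} = 0 for any index k_1 attaining the minimum. (ii) If c has a strictly negative entry, set α_2 = max{ v_k / c_k : c_k < 0 }; then V (v − α_2 c) = μ, every entry of v − α_2 c is nonnegative, and (v − α_2 c)_{k_2} = 0 for any index k_2 attaining the maximum. -/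
/-- Node-removal step of the implicit quadrature rule: let `v` be nonnegative weights with
`V v = μ` and let `c` be a null vector of `V`. (i) If `c` has a positive entry, subtracting
`α₁ • c` with `α₁ = min { v k / c k : c k > 0 }` preserves exactness and nonnegativity and
annihilates every weight attaining the minimum. (ii) Symmetrically for
`α₂ = max { v k / c k : c k < 0 }`. -/
theorem node_removal_step {m n : ℕ} (V : Matrix (Fin m) (Fin n) ℝ) (μ : Fin m → ℝ)
    (v : Fin n → ℝ) (hv : ∀ k, 0 ≤ v k) (hVv : V.mulVec v = μ)
    (c : Fin n → ℝ) (hc : V.mulVec c = 0) :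
    (∀ (hpos : (Finset.univ.filter fun k => 0 < c k).Nonempty) (α₁ : ℝ),
        α₁ = (Finset.univ.filter fun k => 0 < c k).inf' hpos (fun k => v k / c k) →
        V.mulVec (v - α₁ • c) = μ ∧ (∀ k, 0 ≤ v k - α₁ * c k) ∧
        ∀ k₁, 0 < c k₁ → v k₁ / c k₁ = α₁ → v k₁ - α₁ * c k₁ = 0) ∧
    (∀ (hneg : (Finset.univ.filter fun k => c k < 0).Nonempty) (α₂ : ℝ),
        α₂ = (Finset.univ.filter fun k => c k < 0).sup' hneg (fun k => v k / c k) →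
        V.mulVec (v - α₂ • c) = μ ∧ (∀ k, 0 ≤ v k - α₂ * c k) ∧
        ∀ k₂, c k₂ < 0 → v k₂ / c k₂ = α₂ → v k₂ - α₂ * c k₂ = 0) := by
  have hV : ∀ a : ℝ, V.mulVec (v - a • c) = μ := by
    intro a
    rw [Matrix.mulVec_sub, Matrix.mulVec_smul, hc, hVv]
    simp
  refine ⟨?_, ?_⟩
  · intro hpos a ha
    refine ⟨hV a, ?_, ?_⟩
    · intro k
      have ha0 : 0 ≤ a := by
        rw [ha]
        apply Finset.le_inf'
        intro j hj
        exact div_nonneg (hv j) (Finset.mem_filter.mp hj).2.le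
      by_cases hk : 0 < c k
      · have h1 : a ≤ v k / c k := by
          rw [ha]
          exact Finset.inf'_le (fun k => v k / c k) (by simpa using hk)
        rw [le_div_iff₀ hk] at h1
        linarith
      · have := mul_nonneg ha0 (neg_nonneg.mpr (not_lt.mp hk))
        linarith [hv k]
    · intro k hk h
      rw [← h, div_mul_cancel₀ _ hk.ne', sub_self]
  · intro hneg a ha
    refine ⟨hV a, ?_, ?_⟩
    · intro k
      have ha0 : a ≤ 0 := by
        rw [ha]
        apply Finset.sup'_le
        intro j hj
        exact div_nonpos_of_nonneg_of_nonpos (hv j) (Finset.mem_filter.mp hj).2.le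
      by_cases hk : c k < 0
      · have h1 : v k / c k ≤ a := by
          rw [ha]
          exact Finset.le_sup' (fun k => v k / c k) (by simpa using hk)
        rw [div_le_iff_of_neg hk] at h1
        linarith
      · have := mul_nonneg (neg_nonneg.mpr ha0) (not_lt.mp hk)
        linarith [hv k]
    · intro k hk h
      rw [← h, div_mul_cancel₀ _ hk.ne, sub_self]
end

section
/- Let Ω be a set and φ_0,…,φ_D : Ω → ℝ with φ_0 the constant function 1. Let y_0,…,y_{K+1} ∈ Ω be samples and suppose x_0,…,x_D ∈ Ω and nonnegative weights w_0,…,w_D satisfy Σ_{k=0}^D w_k φ_j(x_k) = (1/(K+1)) Σ_{i=0}^K φ_j(y_i) for all j = 0,…,D. Then there exist nonnegative weights v_0,…,v_{D+1} with v_{k_0} = 0 for at least one index k_0, such that, writing x_{D+1} = y_{K+1}, Σ_{k=0}^{D+1} v_k φ_j(x_k) = (1/(K+2)) Σ_{i=0}^{K+1} φ_j(y_i) for all j = 0,…,D. -/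
/-- Removing a node: move along a null vector with zero sum until a weight vanishes. -/
theorem exists_reduce {n : ℕ} (u c : Fin n → ℝ) (hu : ∀ k, 0 ≤ u k) (hc : c ≠ 0)
    (hs : ∑ k, c k = 0) : ∃ t : ℝ, (∀ k, 0 ≤ u k - t * c k) ∧ ∃ k, u k - t * c k = 0 := by
  have hpos : ∃ k, 0 < c k := by
    by_contra! hneg
    apply hc
    funext k
    exact (Finset.sum_eq_zero_iff_of_nonpos (fun i _ => hneg i)).1 hs k (Finset.mem_univ k)
  obtain ⟨k1, hk1⟩ := hpos
  obtain ⟨k0, hk0, hmin⟩ := Finset.exists_min_image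
    (Finset.univ.filter (fun k => 0 < c k)) (fun k => u k / c k) ⟨k1, by simp [hk1]⟩
  have hk0' : 0 < c k0 := by simpa using hk0
  refine ⟨u k0 / c k0, fun k => ?_, k0, ?_⟩
  · by_cases hk : 0 < c k
    · have h1 := hmin k (by simp [hk])
      have h2 := (le_div_iff₀ hk).1 h1
      linarith
    · have h1 : 0 ≤ u k0 / c k0 := div_nonneg (hu k0) hk0'.le
      have h2 := mul_nonneg h1 (neg_nonneg.2 (not_lt.1 hk))
      have h3 := hu k
      linarith
  · rw [div_mul_cancel₀ _ hk0'.ne', sub_self]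

/-- Theorem 3.1 of the paper (one iteration of the implicit quadrature rule): given a
positive quadrature rule with nodes `x 0, …, x D` exact for the moments of the samples
`y 0, …, y K` (with `φ 0 ≡ 1`), there are nonnegative weights `v` on the `D + 2` nodes
obtained by appending the new sample `y (K+1)`, at least one of which vanishes, forming a
rule exact for the moments of the samples `y 0, …, y (K+1)`. -/
theorem implicit_rule_iteration {Ω : Type*} {D K : ℕ}
    (φ : Fin (D + 1) → Ω → ℝ) (hφ0 : ∀ p : Ω, φ 0 p = 1)
    (y : Fin (K + 2) → Ω) (x : Fin (D + 1) → Ω)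
    (w : Fin (D + 1) → ℝ) (hw : ∀ k, 0 ≤ w k)
    (h : ∀ j, ∑ k, w k * φ j (x k)
        = (1 / ((K : ℝ) + 1)) * ∑ i : Fin (K + 1), φ j (y i.castSucc)) :
    ∃ v : Fin (D + 2) → ℝ, (∀ k, 0 ≤ v k) ∧ (∃ k₀, v k₀ = 0) ∧
      ∀ j, ∑ k, v k * φ j ((Fin.snoc x (y (Fin.last (K + 1))) : Fin (D + 2) → Ω) k)
        = (1 / ((K : ℝ) + 2)) * ∑ i, φ j (y i) := by
  set z : Fin (D + 2) → Ω := Fin.snoc x (y (Fin.last (K + 1))) with hz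
  let M : Matrix (Fin (D + 1)) (Fin (D + 2)) ℝ := fun j k => φ j (z k)
  have hker : LinearMap.ker M.mulVecLin ≠ ⊥ :=
    LinearMap.ker_ne_bot_of_finrank_lt (by simp)
  obtain ⟨c, hcM, hc⟩ := (Submodule.ne_bot_iff _).1 hker
  have hcj : ∀ j, ∑ k, c k * φ j (z k) = 0 := by
    intro j
    have h1 := congrFun (LinearMap.mem_ker.1 hcM) j
    simp only [Matrix.mulVecLin_apply, Matrix.mulVec, dotProduct, M, Pi.zero_apply] at h1
    rw [← h1]
    exact Finset.sum_congr rfl fun k _ => mul_comm _ _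
  have hs : ∑ k, c k = 0 := by simpa [hφ0] using hcj 0
  have hK1 : (0 : ℝ) < (K : ℝ) + 1 := by positivity
  have hK2 : (0 : ℝ) < (K : ℝ) + 2 := by positivity
  let u : Fin (D + 2) → ℝ :=
    Fin.snoc (fun k => ((K : ℝ) + 1) / ((K : ℝ) + 2) * w k) (1 / ((K : ℝ) + 2))
  have hu : ∀ k, 0 ≤ u k := by
    intro k
    refine Fin.lastCases ?_ (fun i => ?_) k
    · simp only [u, Fin.snoc_last]
      positivity
    · simp only [u, Fin.snoc_castSucc]
      exact mul_nonneg (by positivity) (hw i)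
  have huj : ∀ j, ∑ k, u k * φ j (z k) = (1 / ((K : ℝ) + 2)) * ∑ i, φ j (y i) := by
    intro j
    rw [Fin.sum_univ_castSucc, Fin.sum_univ_castSucc (n := K + 1)]
    simp only [u, hz, Fin.snoc_last, Fin.snoc_castSucc, mul_assoc]
    rw [← Finset.mul_sum, h j]
    field_simp
  obtain ⟨t, ht, hk⟩ := exists_reduce u c hu hc hs
  refine ⟨fun k => u k - t * c k, ht, hk, fun j => ?_⟩
  simp only [sub_mul, Finset.sum_sub_distrib, mul_assoc]
  rw [← Finset.mul_sum, hcj, huj]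
  ring
end

section
/- Let Ω be a set, let Y ⊆ Ω be a nonempty finite set, and let φ_0,…,φ_D : Ω → ℝ. Then there exists a function w : Y → ℝ with w(y) ≥ 0 for all y ∈ Y, such that the set {y ∈ Y : w(y) ≠ 0} has at most D + 1 elements, and Σ_{y∈Y} w(y) φ_j(y) = (1/|Y|) Σ_{y∈Y} φ_j(y) for every j = 0,…,D. -/
open Classical in
/-- A nontrivial relation on a set with more than `D + 1` points, positive somewhere. -/
theorem exists_relation_aux {Ω : Type*} (S : Finset Ω) {D : ℕ} (φ : Fin (D + 1) → Ω → ℝ)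
    (hS : D + 1 < S.card) :
    ∃ g : Ω → ℝ, (∀ y, y ∉ S → g y = 0) ∧ (∃ y ∈ S, 0 < g y) ∧
      ∀ j, ∑ y ∈ S, g y * φ j y = 0 := by
  let L : (S → ℝ) →ₗ[ℝ] (Fin (D + 1) → ℝ) :=
    Matrix.mulVecLin (Matrix.of fun j (y : S) => φ j y)
  have hk : LinearMap.ker L ≠ ⊥ := LinearMap.ker_ne_bot_of_finrank_lt (by simpa using hS)
  obtain ⟨f, hf, hf0⟩ := (Submodule.ne_bot_iff _).1 hk
  have key : ∀ f : S → ℝ, L f = 0 → (∃ y, 0 < f y) →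
      ∃ g : Ω → ℝ, (∀ y, y ∉ S → g y = 0) ∧ (∃ y ∈ S, 0 < g y) ∧
      ∀ j, ∑ y ∈ S, g y * φ j y = 0 := by
    rintro f hf ⟨y, hy⟩
    refine ⟨fun y => if h : y ∈ S then f ⟨y, h⟩ else 0, fun y hy => by simp [hy],
      ⟨y, y.2, by simpa using hy⟩, fun j => ?_⟩
    have h := congrFun hf j
    simp only [L, Matrix.mulVecLin_apply, Matrix.mulVec, dotProduct, Matrix.of_apply,
      Pi.zero_apply] at h
    rw [← Finset.sum_coe_sort, ← h]
    refine Finset.sum_congr rfl fun y _ => ?_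
    simp [mul_comm]
  obtain ⟨y, hy⟩ := Function.ne_iff.1 hf0
  have hf' : L f = 0 := hf
  rcases lt_or_gt_of_ne hy with h | h
  · exact key (-f) (by rw [map_neg, hf', neg_zero]) ⟨y, by simpa using h⟩
  · exact key f hf' ⟨y, h⟩

open Classical in
/-- Conic Carathéodory reduction, by induction on the size of the support. -/
theorem reduce_aux {Ω : Type*} (Y : Finset Ω) {D : ℕ} (φ : Fin (D + 1) → Ω → ℝ) (n : ℕ) :
    ∀ w : Ω → ℝ, (∀ y ∈ Y, 0 ≤ w y) → (Y.filter fun y => w y ≠ 0).card ≤ n →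
    ∃ v : Ω → ℝ, (∀ y ∈ Y, 0 ≤ v y) ∧ (Y.filter fun y => v y ≠ 0).card ≤ D + 1 ∧
      ∀ j, ∑ y ∈ Y, v y * φ j y = ∑ y ∈ Y, w y * φ j y := by
  induction n with
  | zero => exact fun w hw h => ⟨w, hw, by omega, fun _ => rfl⟩
  | succ n ih =>
    intro w hw hn
    by_cases hc : (Y.filter fun y => w y ≠ 0).card ≤ D + 1
    · exact ⟨w, hw, hc, fun _ => rfl⟩
    set S := Y.filter fun y => w y ≠ 0 with hSdef
    have hSY : S ⊆ Y := Finset.filter_subset _ _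
    obtain ⟨g, hg0, ⟨y0, hy0, hgy0⟩, hg⟩ := exists_relation_aux S φ (not_le.1 hc)
    obtain ⟨z, hz, hmin⟩ := Finset.exists_min_image (S.filter fun y => 0 < g y)
      (fun y => w y / g y) ⟨y0, by simp [hy0, hgy0]⟩
    obtain ⟨hzS, hgz⟩ := Finset.mem_filter.1 hz
    have ht : 0 ≤ w z / g z := div_nonneg (hw z (hSY hzS)) hgz.le
    set t := w z / g z with htdef
    obtain ⟨v, hv, hvc, hvm⟩ := ih (fun y => w y - t * g y) (by
      intro y hy
      by_cases hyg : 0 < g y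
      · have hyS : y ∈ S := by
          by_contra h
          rw [hg0 y h] at hyg
          exact lt_irrefl _ hyg
        have := hmin y (Finset.mem_filter.2 ⟨hyS, hyg⟩)
        have := (le_div_iff₀ hyg).1 this
        linarith
      · have := mul_nonpos_of_nonneg_of_nonpos ht (not_lt.1 hyg)
        have := hw y hy
        linarith) (by
      refine Nat.le_of_lt_succ (lt_of_lt_of_le (Finset.card_lt_card ?_) hn)
      refine (Finset.ssubset_iff_of_subset ?_).2 ⟨z, hzS, ?_⟩
      · intro y hy
        obtain ⟨hyY, hne⟩ := Finset.mem_filter.1 hy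
        by_contra h
        apply hne
        have hw0 : w y = 0 := by
          by_contra h'
          exact h (Finset.mem_filter.2 ⟨hyY, h'⟩)
        simp [hw0, hg0 y h]
      · intro h
        apply (Finset.mem_filter.1 h).2
        have : t * g z = w z := div_mul_cancel₀ _ hgz.ne'
        simp [this])
    refine ⟨v, hv, hvc, fun j => ?_⟩
    have hsum : ∑ y ∈ Y, g y * φ j y = 0 := by
      rw [← hg j]
      exact (Finset.sum_subset hSY fun y _ h => by simp [hg0 y h]).symm
    rw [hvm j]
    simp only [sub_mul, Finset.sum_sub_distrib, mul_assoc, ← Finset.mul_sum, hsum]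
    simp

open Classical in
/-- Discrete Tchakaloff-type existence result: for any nonempty finite sample set `Y` and
functions `φ 0, …, φ D`, there are nonnegative weights supported on at most `D + 1`
samples reproducing all `D + 1` sample moments exactly. -/
theorem discrete_tchakaloff {Ω : Type*} (Y : Finset Ω) (hY : Y.Nonempty)
    {D : ℕ} (φ : Fin (D + 1) → Ω → ℝ) :
    ∃ w : Ω → ℝ, (∀ y ∈ Y, 0 ≤ w y) ∧
      (Y.filter fun y => w y ≠ 0).card ≤ D + 1 ∧
      ∀ j, ∑ y ∈ Y, w y * φ j y = (1 / (Y.card : ℝ)) * ∑ y ∈ Y, φ j y := by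
  obtain ⟨v, hv, hc, hm⟩ := reduce_aux Y φ _ (fun _ => 1 / (Y.card : ℝ))
    (fun _ _ => by positivity) le_rfl
  exact ⟨v, hv, hc, fun j => by rw [hm j, Finset.mul_sum]⟩
end

section
/- Let x_0,…,x_N be points of a set Ω, φ_0,…,φ_{N−1} : Ω → ℝ, μ_0,…,μ_{N−1} ∈ ℝ, and w ∈ ℝ^{N+1} with Σ_{k=0}^N w_k φ_j(x_k) = μ_j for j = 0,…,N−1. Let c ∈ ℝ^{N+1} satisfy Σ_{k=0}^N c_k φ_j(x_k) = 0 for j = 0,…,N−1, suppose both {k : c_k > 0} and {k : c_k < 0} are nonempty, and suppose w_k ≥ 0 for every k with c_k = 0. Set α_min = max{ w_k / c_k : c_k < 0 } and α_max = min{ w_k / c_k : c_k > 0 }. If α_min ≤ α_max, then there exist α ∈ ℝ and an index k_0 such that the vector w' = w − α c satisfies w'_k ≥ 0 for all k, w'_{k_0} = 0, and Σ_{k=0}^N w'_k φ_j(x_k) = μ_j for j = 0,…,N−1. -/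
/-- Implication (1 ⇒ 2) of Lemma 3.2 (negative weight removal): if
`α_min = max { w k / c k : c k < 0 } ≤ α_max = min { w k / c k : c k > 0 }`, then some
`α` and some index `k₀` give a nonnegative exact weight vector `w - α c` vanishing
at `k₀`. -/
theorem negative_weight_removal {Ω : Type*} {N : ℕ}
    (x : Fin (N + 1) → Ω) (φ : Fin N → Ω → ℝ) (μ : Fin N → ℝ)
    (w c : Fin (N + 1) → ℝ)
    (hw : ∀ j, ∑ k, w k * φ j (x k) = μ j)
    (hc : ∀ j, ∑ k, c k * φ j (x k) = 0)
    (hpos : (Finset.univ.filter fun k => 0 < c k).Nonempty)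
    (hneg : (Finset.univ.filter fun k => c k < 0).Nonempty)
    (hw0 : ∀ k, c k = 0 → 0 ≤ w k)
    (h : (Finset.univ.filter fun k => c k < 0).sup' hneg (fun k => w k / c k)
        ≤ (Finset.univ.filter fun k => 0 < c k).inf' hpos (fun k => w k / c k)) :
    ∃ (α : ℝ) (k₀ : Fin (N + 1)), (∀ k, 0 ≤ w k - α * c k) ∧ w k₀ - α * c k₀ = 0 ∧
      ∀ j, ∑ k, (w k - α * c k) * φ j (x k) = μ j := by
  obtain ⟨k₀, hk₀, he⟩ := Finset.exists_mem_eq_inf' hpos (fun k => w k / c k)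
  have hk₀' : 0 < c k₀ := by simpa using hk₀
  refine ⟨w k₀ / c k₀, k₀, ?_, ?_, ?_⟩
  · intro k
    rcases lt_trichotomy (c k) 0 with hk | hk | hk
    · have h1 : w k / c k ≤ w k₀ / c k₀ := by
        have h2 := Finset.le_sup' (s := Finset.univ.filter fun k => c k < 0)
          (fun k => w k / c k) (b := k) (by simpa using hk)
        exact (h2.trans h).trans he.le
      have h3 := (div_le_iff_of_neg hk).1 h1
      linarith
    · have := hw0 k hk
      rw [hk]
      linarith
    · have h1 : w k₀ / c k₀ ≤ w k / c k := by
        have h2 := Finset.inf'_le (s := Finset.univ.filter fun k => 0 < c k)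
          (fun k => w k / c k) (b := k) (by simpa using hk)
        exact he.ge.trans h2
      have h3 := (le_div_iff₀ hk).1 h1
      linarith
  · rw [div_mul_cancel₀ _ hk₀'.ne', sub_self]
  · intro j
    simp only [sub_mul, Finset.sum_sub_distrib, mul_assoc, ← Finset.mul_sum, hw, hc]
    simp
end

section
/- Let x_0,…,x_N be points of a set Ω and φ_0,…,φ_N : Ω → ℝ, and let μ_0,…,μ_N ∈ ℝ. Let w ∈ ℝ^{N+1} satisfy Σ_{k=0}^N w_k φ_j(x_k) = μ_j for all j = 0,…,N, and let w' ∈ ℝ^{N+1} satisfy w'_k ≥ 0 for all k, w'_{k_0} = 0 for some index k_0, and Σ_{k=0}^N w'_k φ_j(x_k) = μ_j for all j = 0,…,N−1. Define c = w − w' ∈ ℝ^{N+1}. Then: (i) Σ_{k=0}^N c_k φ_j(x_k) = 0 for j = 0,…,N−1; (ii) if c_{k_0} > 0 then min{ w_k / c_k : c_k > 0 } = 1; (iii) if c_{k_0} < 0 then max{ w_k / c_k : c_k < 0 } = 1. -/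
/-- Implication (2 ⇒ 3) of Lemma 3.2: if `w` is exact for all `N + 1` moments and `w'` is
a nonnegative weight vector vanishing at `k₀` that is exact for the first `N` moments,
then `c = w - w'` is a null vector of the reduced Vandermonde system, and (`α = 1` being
the corresponding scaling) `min { w k / c k : c k > 0 } = 1` if `c k₀ > 0`, while
`max { w k / c k : c k < 0 } = 1` if `c k₀ < 0`. -/
theorem removal_weights_from_null_vector {Ω : Type*} {N : ℕ}
    (x : Fin (N + 1) → Ω) (φ : Fin (N + 1) → Ω → ℝ) (μ : Fin (N + 1) → ℝ)
    (w w' : Fin (N + 1) → ℝ) (k₀ : Fin (N + 1))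
    (hw : ∀ j, ∑ k, w k * φ j (x k) = μ j)
    (hw' : ∀ k, 0 ≤ w' k) (hk₀ : w' k₀ = 0)
    (hw'ex : ∀ j : Fin N, ∑ k, w' k * φ j.castSucc (x k) = μ j.castSucc) :
    (∀ j : Fin N, ∑ k, (w k - w' k) * φ j.castSucc (x k) = 0) ∧
    (0 < w k₀ - w' k₀ →
      IsLeast ((fun k => w k / (w k - w' k)) '' {k | 0 < w k - w' k}) 1) ∧
    (w k₀ - w' k₀ < 0 →
      IsGreatest ((fun k => w k / (w k - w' k)) '' {k | w k - w' k < 0}) 1) := by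
  refine ⟨fun j => ?_, fun h => ⟨⟨k₀, h, ?_⟩, ?_⟩, fun h => ⟨⟨k₀, h, ?_⟩, ?_⟩⟩
  · simp only [sub_mul, Finset.sum_sub_distrib]
    rw [hw, hw'ex, sub_self]
  · simp only [hk₀, sub_zero] at h ⊢
    exact div_self h.ne'
  · rintro _ ⟨k, hk, rfl⟩
    have hk2 : 0 < w k - w' k := hk
    show 1 ≤ w k / (w k - w' k)
    rw [le_div_iff₀ hk2]
    linarith [hw' k]
  · simp only [hk₀, sub_zero] at h ⊢
    exact div_self h.ne
  · rintro _ ⟨k, hk, rfl⟩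
    have hk2 : w k - w' k < 0 := hk
    show w k / (w k - w' k) ≤ 1
    rw [div_le_iff_of_neg hk2]
    linarith [hw' k]
end

section
/- Let x_0,…,x_N be points of a set Ω, φ_0,…,φ_{N−1} : Ω → ℝ, μ_0,…,μ_{N−1} ∈ ℝ, and let w ∈ ℝ^{N+1} satisfy Σ_{k=0}^N w_k φ_j(x_k) = μ_j for j ≤ N−1. Let c ∈ ℝ^{N+1} satisfy Σ_{k=0}^N c_k φ_j(x_k) = 0 for j ≤ N−1, and assume: (a) every w'' ∈ ℝ^{N+1} with Σ_k w''_k φ_j(x_k) = μ_j for all j ≤ N−1 is of the form w'' = w − α c for some α ∈ ℝ; (b) {k : c_k > 0} and {k : c_k < 0} are nonempty; setting α_min = max{ w_k / c_k : c_k < 0 } and α_max = min{ w_k / c_k : c_k > 0 }, assume α_min < α_max; (c) there is a unique index k_max with c_{k_max} > 0 and w_{k_max}/c_{k_max} = α_max and a unique index k_min with c_{k_min} < 0 and w_{k_min}/c_{k_min} = α_min; (d) w_k > 0 for every k with c_k = 0. Then an index k_0 admits a vector w' ∈ ℝ^{N+1} with w'_k ≥ 0 for all k, w'_{k_0} = 0,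 and Σ_k w'_k φ_j(x_k) = μ_j for all j ≤ N−1, if and only if k_0 = k_min or k_0 = k_max. -/
/-- Exactly two nodes can be removed (claim following Lemma 3.2): if every exact weight
vector is of the form `w - α • c`, if `α_min < α_max` with uniquely attained extremal
ratios at `kmin` and `kmax`, and if `w k > 0` whenever `c k = 0`, then an index `k₀`
admits a nonnegative exact weight vector vanishing at `k₀` iff `k₀ = kmin` or
`k₀ = kmax`. -/
theorem exactly_two_removable_nodes {Ω : Type*} {N : ℕ}
    (x : Fin (N + 1) → Ω) (φ : Fin N → Ω → ℝ) (μ : Fin N → ℝ)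
    (w c : Fin (N + 1) → ℝ)
    (hw : ∀ j, ∑ k, w k * φ j (x k) = μ j)
    (hc : ∀ j, ∑ k, c k * φ j (x k) = 0)
    (ha : ∀ w'' : Fin (N + 1) → ℝ, (∀ j, ∑ k, w'' k * φ j (x k) = μ j) →
      ∃ α : ℝ, w'' = w - α • c)
    (hpos : (Finset.univ.filter fun k => 0 < c k).Nonempty)
    (hneg : (Finset.univ.filter fun k => c k < 0).Nonempty)
    (αmin αmax : ℝ)
    (hαmin : αmin = (Finset.univ.filter fun k => c k < 0).sup' hneg fun k => w k / c k)
    (hαmax : αmax = (Finset.univ.filter fun k => 0 < c k).inf' hpos fun k => w k / c k)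
    (hlt : αmin < αmax)
    (kmin kmax : Fin (N + 1))
    (hkmax : 0 < c kmax ∧ w kmax / c kmax = αmax)
    (hkmaxu : ∀ k, 0 < c k → w k / c k = αmax → k = kmax)
    (hkmin : c kmin < 0 ∧ w kmin / c kmin = αmin)
    (hkminu : ∀ k, c k < 0 → w k / c k = αmin → k = kmin)
    (hd : ∀ k, c k = 0 → 0 < w k) :
    ∀ k₀, (∃ w' : Fin (N + 1) → ℝ, (∀ k, 0 ≤ w' k) ∧ w' k₀ = 0 ∧
        ∀ j, ∑ k, w' k * φ j (x k) = μ j) ↔ (k₀ = kmin ∨ k₀ = kmax) := by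
  have hmax : ∀ k, 0 < c k → αmax ≤ w k / c k := by
    intro k hk
    rw [hαmax]
    exact Finset.inf'_le (fun k => w k / c k) (by simp [hk])
  have hmin : ∀ k, c k < 0 → w k / c k ≤ αmin := by
    intro k hk
    rw [hαmin]
    exact Finset.le_sup' (fun k => w k / c k) (by simp [hk])
  have hnn : ∀ α, αmin ≤ α → α ≤ αmax → ∀ k, 0 ≤ w k - α * c k := by
    intro α h1 h2 k
    rcases lt_trichotomy (c k) 0 with h | h | h
    · have := (div_le_iff_of_neg h).1 ((hmin k h).trans h1)
      linarith
    · have := hd k h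
      rw [h]
      linarith
    · have := (le_div_iff₀ h).1 (h2.trans (hmax k h))
      linarith
  have hex : ∀ α j, ∑ k, (w k - α * c k) * φ j (x k) = μ j := by
    intro α j
    have : ∑ k, (w k - α * c k) * φ j (x k)
        = ∑ k, w k * φ j (x k) - α * ∑ k, c k * φ j (x k) := by
      rw [Finset.mul_sum, ← Finset.sum_sub_distrib]
      exact Finset.sum_congr rfl fun k _ => by ring
    rw [this, hw, hc]
    ring
  intro k₀
  constructor
  · rintro ⟨w', h0, hz, he⟩
    obtain ⟨α, rfl⟩ := ha w' he
    simp only [Pi.sub_apply, Pi.smul_apply, smul_eq_mul] at h0 hz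
    have h1 : α ≤ αmax := by
      rw [← hkmax.2, le_div_iff₀ hkmax.1]
      linarith [h0 kmax]
    have h2 : αmin ≤ α := by
      rw [← hkmin.2, div_le_iff_of_neg hkmin.1]
      linarith [h0 kmin]
    rcases lt_trichotomy (c k₀) 0 with h | h | h
    · left
      have hr : w k₀ / c k₀ = α := by
        rw [div_eq_iff h.ne]
        linarith
      exact hkminu k₀ h (le_antisymm (hmin k₀ h) (hr ▸ h2))
    · have := hd k₀ h
      rw [h] at hz
      linarith
    · right
      have hr : w k₀ / c k₀ = α := by
        rw [div_eq_iff h.ne']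
        linarith
      exact hkmaxu k₀ h (le_antisymm (hr ▸ h1) (hmax k₀ h))
  · rintro (rfl | rfl)
    · refine ⟨fun k => w k - αmin * c k, hnn αmin le_rfl hlt.le, ?_, hex αmin⟩
      have := (div_eq_iff hkmin.1.ne).1 hkmin.2
      simp only
      linarith
    · refine ⟨fun k => w k - αmax * c k, hnn αmax hlt.le le_rfl, ?_, hex αmax⟩
      have := (div_eq_iff hkmax.1.ne').1 hkmax.2
      simp only
      linarith
end

section
/- Let Ω be a set, let X_0 ⊆ Ω be a finite set of prescribed nodes, let Y ⊆ Ω be a nonempty finite sample set, and let φ_0,…,φ_D : Ω → ℝ. Then there exist a subset S ⊆ Y with |S| ≤ D + 1 and a function w : X_0 ∪ S → ℝ with w(x) ≥ 0 for all x, such that Σ_{x ∈ X_0 ∪ S} w(x) φ_j(x) = (1/|Y|) Σ_{y∈Y} φ_j(y) for every j = 0,…,D. In particular, a positive quadrature rule exact for all D+1 sample moments whose node set contains X_0 can be obtained by adding at most M ≤ D + 1 nodes to X_0. -/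
lemma conic_step {Ω : Type*} [DecidableEq Ω] {D : ℕ} (φ : Fin (D + 1) → Ω → ℝ)
    (T : Finset Ω) (hT : D + 1 < T.card) :
    ∃ g : Ω → ℝ, (∀ j, ∑ p ∈ T, g p * φ j p = 0) ∧ ∃ p ∈ T, 0 < g p := by
  have hli : ¬ LinearIndependent ℝ (fun p : T => fun j => φ j p.1) := by
    intro h
    have := h.fintype_card_le_finrank
    simp at this
    omega
  rw [Fintype.not_linearIndependent_iff] at hli
  obtain ⟨g, hg, ⟨i, hi⟩, hne⟩ := hli
  have key : ∀ j, ∑ p ∈ T, (if h : p ∈ T then g ⟨p, h⟩ else 0) * φ j p = 0 := by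
    intro j
    rw [← Finset.sum_coe_sort]
    have := congrFun hg j
    simpa [Finset.sum_apply] using this
  rcases lt_or_gt_of_ne hne with h | h
  · refine ⟨fun p => - (if h : p ∈ T then g ⟨p, h⟩ else 0), ?_, i, hi, ?_⟩
    · intro j
      simp only [neg_mul, Finset.sum_neg_distrib, key j, neg_zero]
    · simpa [hi] using h
  · exact ⟨_, key, i, hi, by simpa [hi] using h⟩

lemma conic_caratheodory {Ω : Type*} [DecidableEq Ω] {D : ℕ} (φ : Fin (D + 1) → Ω → ℝ)
    (n : ℕ) : ∀ (T : Finset Ω) (w : Ω → ℝ), T.card ≤ n → (∀ p ∈ T, 0 ≤ w p) →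
    ∃ S ⊆ T, S.card ≤ D + 1 ∧ ∃ w' : Ω → ℝ, (∀ p ∈ S, 0 ≤ w' p) ∧
      ∀ j, ∑ p ∈ S, w' p * φ j p = ∑ p ∈ T, w p * φ j p := by
  induction n with
  | zero => exact fun T w hn hw => ⟨T, subset_rfl, by omega, w, hw, fun _ => rfl⟩
  | succ n ih =>
    intro T w hn hw
    by_cases hT : T.card ≤ D + 1
    · exact ⟨T, subset_rfl, hT, w, hw, fun _ => rfl⟩
    obtain ⟨g, hg, q, hq, hgq⟩ := conic_step φ T (by omega)
    obtain ⟨p, hp, hmin⟩ := Finset.exists_min_image (T.filter (fun p => 0 < g p))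
      (fun p => w p / g p) ⟨q, by simp [hq, hgq]⟩
    simp only [Finset.mem_filter] at hp hmin
    obtain ⟨hpT, hgp⟩ := hp
    have hc : 0 ≤ w p / g p := div_nonneg (hw p hpT) hgp.le
    obtain ⟨S, hS, hcard, w', hw', hsum⟩ := ih (T.erase p) (fun x => w x - w p / g p * g x)
      (by rw [Finset.card_erase_of_mem hpT]; omega) (by
        intro x hx
        have hxT := Finset.mem_of_mem_erase hx
        rcases lt_or_ge 0 (g x) with h | h
        · have := hmin x ⟨hxT, h⟩
          rw [le_div_iff₀ h] at this
          linarith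
        · have := mul_nonpos_of_nonneg_of_nonpos hc h
          have := hw x hxT
          linarith)
    refine ⟨S, hS.trans (Finset.erase_subset _ _), hcard, w', hw', fun j => ?_⟩
    rw [hsum j, Finset.sum_erase]
    · simp only [sub_mul, Finset.sum_sub_distrib, mul_assoc, ← Finset.mul_sum, hg j]
      simp
    · rw [div_mul_cancel₀ _ hgp.ne']; simp

/-- Nested implicit quadrature rule bound: given prescribed nodes `X₀`, a nonempty finite
sample set `Y` and functions `φ 0, …, φ D`, one can add at most `D + 1` nodes taken from
`Y` to `X₀` and find nonnegative weights on the extended node set reproducing all `D + 1`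
sample moments exactly. -/
theorem nested_rule_node_bound {Ω : Type*} [DecidableEq Ω]
    (X₀ : Finset Ω) (Y : Finset Ω) (hY : Y.Nonempty)
    {D : ℕ} (φ : Fin (D + 1) → Ω → ℝ) :
    ∃ S : Finset Ω, S ⊆ Y ∧ S.card ≤ D + 1 ∧
      ∃ w : Ω → ℝ, (∀ p ∈ X₀ ∪ S, 0 ≤ w p) ∧
        ∀ j, ∑ p ∈ X₀ ∪ S, w p * φ j p = (1 / (Y.card : ℝ)) * ∑ y ∈ Y, φ j y := by
  obtain ⟨S, hS, hcard, w, hw, hsum⟩ := conic_caratheodory φ Y.card Y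
    (fun _ => 1 / (Y.card : ℝ)) le_rfl (fun _ _ => by positivity)
  refine ⟨S, hS, hcard, fun p => if p ∈ S then w p else 0, ?_, fun j => ?_⟩
  · intro p _
    dsimp only
    split_ifs with h
    · exact hw p h
    · exact le_rfl
  · rw [Finset.mul_sum, ← hsum j]
    symm
    rw [← Finset.sum_subset (Finset.subset_union_right : S ⊆ X₀ ∪ S)]
    · exact Finset.sum_congr rfl fun p hp => by simp [hp]
    · intro p _ hp
      simp [hp]
end
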